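/- arXiv:1906.11073 — 3 statements merged into one kernel-verified Lean document; each statement's English description precedes it below -/
import Mathlib

section
/- Bound on the triple mix-term integral J₆. Let M > 0 and c₁, c₂ ∈ ℝ with c₁ ≠ c₂. Then there exists a constant C > 0 such that for every x ∈ ℝ and every t ≥ 0: ∫_0^t ∫_0^s ∫_ℝ exp( −2(x−y+c₁(t−s))²/(M(t−s)) − (y+c₁s)²/(M(1+s)) − (y + c₂s + r(c₁−c₂))²/(M(1+s)) ) / ( (1+s) √(t−s) (1+r) ) · ( (1+r)^{1/4}/√r + 1/√(s−r) ) dy dr ds ≤ C e^{−(x+c₁t)²/(M(1+t))} / √(1+t). -/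
open MeasureTheory Set

noncomputable section


def pp (v : ℝ) : ℝ := (√v)⁻¹ * (1+v)^(-(5/8):ℝ)
def PP : ℝ → ℝ := (Ioi 0).indicator pp

lemma pp_nonneg (v : ℝ) (hv : 0 < v) : 0 ≤ pp v := by unfold pp; positivity
lemma PP_nonneg (v : ℝ) : 0 ≤ PP v := indicator_nonneg (fun v hv => pp_nonneg v hv) v

lemma pp_int1 : IntegrableOn (fun v : ℝ => (√v)⁻¹) (Ioc 0 1) := by
  have h : IntervalIntegrable (fun x : ℝ => x ^ (-(1/2):ℝ)) volume 0 1 :=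
    intervalIntegral.intervalIntegrable_rpow' (by norm_num)
  rw [intervalIntegrable_iff_integrableOn_Ioc_of_le (by norm_num)] at h
  refine h.congr_fun (fun v hv => ?_) measurableSet_Ioc
  simp only [Real.sqrt_eq_rpow]
  rw [Real.rpow_neg hv.1.le]

lemma PP_int : Integrable PP := by
  unfold PP
  rw [integrable_indicator_iff measurableSet_Ioi, ← Ioc_union_Ioi_eq_Ioi (zero_le_one' ℝ)]
  have hm : Measurable pp := by unfold pp; fun_prop
  refine IntegrableOn.union ?_ ?_
  · refine pp_int1.mono' hm.aestronglyMeasurable ?_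
    filter_upwards [ae_restrict_mem measurableSet_Ioc] with v hv
    rw [Real.norm_of_nonneg (pp_nonneg v hv.1)]
    unfold pp
    have : (1+v)^(-(5/8):ℝ) ≤ 1 := Real.rpow_le_one_of_one_le_of_nonpos (by linarith [hv.1]) (by norm_num)
    have h2 : 0 ≤ (√v)⁻¹ := by positivity
    nlinarith
  · refine (integrableOn_Ioi_rpow_of_lt (a := (-(9/8):ℝ)) (by norm_num) (c := 1) one_pos).mono' hm.aestronglyMeasurable ?_
    filter_upwards [ae_restrict_mem measurableSet_Ioi] with v hv
    have hv : 1 < v := hv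
    have hv0 : 0 < v := by linarith
    rw [Real.norm_of_nonneg (pp_nonneg v hv0)]
    unfold pp
    have e : v^(-(9/8):ℝ) = (√v)⁻¹ * v^(-(5/8):ℝ) := by
      rw [Real.sqrt_eq_rpow, ← Real.rpow_neg hv0.le, ← Real.rpow_add hv0]; norm_num
    rw [e]
    gcongr ?_ * ?_
    exact Real.rpow_le_rpow_of_nonpos hv0 (by linarith) (by norm_num)

lemma dbl (h H : ℝ → ℝ → ℝ) (t : ℝ) 
    (h0 : ∀ s r, 0 < r → r < s → s < t → 0 ≤ h s r)
    (hH : ∀ s r, 0 < r → r < s → s < t → h s r ≤ H s r)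
    (H0 : ∀ s r, 0 ≤ H s r)
    (Hi : Integrable (fun p : ℝ × ℝ => H p.1 p.2) (volume.prod volume)) :
    ∫ s in Ioo 0 t, ∫ r in Ioo 0 s, h s r ≤ ∫ p : ℝ × ℝ, H p.1 p.2 ∂(volume.prod volume) := by
  rw [integral_prod _ Hi]
  have I1 : Integrable (fun s => ∫ r, H s r) := Hi.integral_prod_left
  refine le_trans ?_ (setIntegral_le_integral (s := Ioo 0 t) I1 (Filter.Eventually.of_forall fun s => integral_nonneg (H0 s)))
  refine integral_mono_of_nonneg ?_ I1.integrableOn ?_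
  · filter_upwards [ae_restrict_mem measurableSet_Ioo] with s hs
    refine setIntegral_nonneg measurableSet_Ioo fun r hr => h0 s r hr.1 hr.2 hs.2
  · filter_upwards [ae_restrict_mem measurableSet_Ioo, ae_restrict_of_ae Hi.prod_right_ae] with s hs hi
    refine le_trans ?_ (setIntegral_le_integral (s := Ioo 0 s) hi (Filter.Eventually.of_forall (H0 s)))
    refine integral_mono_of_nonneg ?_ hi.integrableOn ?_
    · filter_upwards [ae_restrict_mem measurableSet_Ioo] with r hr using h0 s r hr.1 hr.2 hs.2
    · filter_upwards [ae_restrict_mem measurableSet_Ioo] with r hr using hH s r hr.1 hr.2 hs.2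

lemma conv_int (F G : ℝ → ℝ) (hF : Integrable F) (hG : Integrable G) :
    Integrable (fun p : ℝ × ℝ => F p.2 * G (p.1 - p.2)) (volume.prod volume) :=
  hF.convolution_integrand (ContinuousLinearMap.mul ℝ ℝ) hG

lemma conv_eq (F G : ℝ → ℝ) (hF : Integrable F) (hG : Integrable G) :
    ∫ p : ℝ × ℝ, F p.2 * G (p.1 - p.2) ∂(volume.prod volume) = (∫ x, F x) * ∫ x, G x := by
  rw [integral_prod _ (conv_int F G hF hG)]
  exact integral_convolution (ContinuousLinearMap.mul ℝ ℝ) hF hG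

lemma yint (M c₁ c₂ x t s r : ℝ) (hM : 0 < M) (hs : 0 < s) (hst : s < t) (A B : ℝ) :
    (∫ y : ℝ, Real.exp (-(2 * (x - y + c₁ * (t - s)) ^ 2) / (M * (t - s)) -
              (y + c₁ * s) ^ 2 / (M * (1 + s)) -
              (y + c₂ * s + r * (c₁ - c₂)) ^ 2 / (M * (1 + s))) /
            ((1 + s) * Real.sqrt (t - s) * A) * B) =
      Real.exp (-(x + c₁ * t) ^ 2 / (M * (1 + t))) / √(1+t) * √(Real.pi * M / 2) *
       ((√(1+s))⁻¹ * (B / A) * Real.exp (-(((c₁-c₂)*(s-r))^2*(t-s)/(2*M*(1+s)*(1+t)) + (x + c₁*t - (c₁-c₂)*(s-r))^2/(M*(1+t))))) := by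
  have h1 : 0 < t - s := by linarith
  have h2 : 0 < 1 + s := by linarith
  have h3 : 0 < 1 + t := by linarith
  set X := x + c₁ * t with hX
  set a := (c₁-c₂)*(s-r) with ha
  set b := 2*(1+t)/(M*(t-s)*(1+s)) with hb
  set μ := X*(1+s)/(1+t) + a*(t-s)/(2*(1+t)) - c₁*s with hμ
  have key : ∀ y, -(2 * (x - y + c₁ * (t - s)) ^ 2) / (M * (t - s)) -
              (y + c₁ * s) ^ 2 / (M * (1 + s)) -
              (y + c₂ * s + r * (c₁ - c₂)) ^ 2 / (M * (1 + s)) = 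
              -b * (y - μ)^2 + (-X ^ 2 / (M * (1 + t)) + (-(a^2*(t-s)/(2*M*(1+s)*(1+t)) + (X - a)^2/(M*(1+t))))) := by
    intro y
    obtain ⟨z, rfl⟩ : ∃ z, y = z - c₁ * s := ⟨y + c₁*s, by ring⟩
    have e1 : x - (z - c₁ * s) + c₁ * (t-s) = X - z := by rw [hX]; ring
    have e2 : z - c₁*s + c₂*s + r*(c₁-c₂) = z - a := by rw [ha]; ring
    have e3 : z - c₁*s + c₁*s = z := by ring
    have e4 : z - c₁*s - μ = z - (X*(1+s)/(1+t) + a*(t-s)/(2*(1+t))) := by rw [hμ]; ring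
    rw [e1, e2, e3, e4, hb]
    clear_value X a
    obtain ⟨p, rfl⟩ : ∃ p, t = p + s := ⟨t - s, by ring⟩
    simp only [add_sub_cancel_right] at *
    have : 1 + (p + s) ≠ 0 := h3.ne'
    field_simp
    ring
  set E2 := Real.exp (-(a^2*(t-s)/(2*M*(1+s)*(1+t)) + (X - a)^2/(M*(1+t)))) with hE2
  set E1 := Real.exp (-X ^ 2 / (M * (1 + t))) with hE1
  have key2 : ∀ y, Real.exp (-(2 * (x - y + c₁ * (t - s)) ^ 2) / (M * (t - s)) -
              (y + c₁ * s) ^ 2 / (M * (1 + s)) -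
              (y + c₂ * s + r * (c₁ - c₂)) ^ 2 / (M * (1 + s))) /
            ((1 + s) * Real.sqrt (t - s) * A) * B =
            Real.exp (-b * (y - μ)^2) * (E1 * E2 / ((1 + s) * Real.sqrt (t - s) * A) * B) := by
    intro y
    rw [key, Real.exp_add, Real.exp_add]
    ring
  simp_rw [key2]
  rw [integral_mul_const, integral_sub_right_eq_self (fun y => Real.exp (-b * y^2)) μ, integral_gaussian]
  have hs1 : √(Real.pi / b) = √(Real.pi * M / 2) * √(t-s) * √(1+s) / √(1+t) := by
    rw [← Real.sqrt_mul (by positivity), ← Real.sqrt_mul (by positivity), ← Real.sqrt_div (by positivity)]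
    congr 1
    rw [hb]; field_simp
  rw [hs1]
  have q1 : 0 < √(t-s) := Real.sqrt_pos.2 h1
  have q2 : 0 < √(1+s) := Real.sqrt_pos.2 h2
  have q0 : 0 < √(1+t) := Real.sqrt_pos.2 h3
  have q4 : √(1+s) / (1+s) = (√(1+s))⁻¹ := by
    rw [Real.sqrt_div_self', one_div]
  have q5 : √(t-s) / √(t-s) = 1 := by field_simp
  calc _ = E1 / √(1+t) * √(Real.pi * M / 2) * (√(1+s) / (1+s) * (B / A) * E2) * (√(t-s) / √(t-s)) := by
        simp only [div_eq_mul_inv, mul_inv]; ring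
    _ = _ := by rw [q5, q4, mul_one]

lemma expb (c q p : ℝ) (hc : 0 < c) (hq : 0 < q) (hp0 : 0 ≤ p) (hp : p ≤ 1) :
    Real.exp (-(c * q)) ≤ (1 + 1/c) * q^(-p) := by
  have h1 : q^p ≤ 1 + q := by
    rcases le_total q 1 with h | h
    · have := Real.rpow_le_one hq.le h hp0
      linarith
    · have := Real.rpow_le_rpow_of_exponent_le h hp
      rw [Real.rpow_one] at this; linarith
  have h2 : 1 + q ≤ (1 + 1/c) * Real.exp (c * q) := by
    have h3 := Real.add_one_le_exp (c*q)
    have h4 : (1:ℝ) ≤ Real.exp (c*q) := Real.one_le_exp (by positivity)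
    have h5 : q = (c*q)/c := by field_simp
    have h6 : q ≤ Real.exp (c*q) / c := by
      rw [h5]; gcongr
      · rw [← h5]; linarith
    calc 1 + q ≤ Real.exp (c*q) + Real.exp (c*q)/c := by linarith
      _ = _ := by ring
  rw [Real.exp_neg, Real.rpow_neg hq.le, ← div_eq_mul_inv, le_div_iff₀ (by positivity), inv_mul_le_iff₀ (Real.exp_pos _)]
  linarith

lemma expc (c u s p : ℝ) (hc : 0 < c) (hs : 0 < s) (hu : 0 < u) (hp0 : 0 ≤ p) (hp : p ≤ 1) :
    Real.exp (-(c * (u^2/(1+s)))) ≤ Real.exp c * (1 + 2/c) * ((1+s)^p * (1+u)^(-(2*p))) := by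
  have h := expb (c/2) ((1+u)^2/(1+s)) p (by positivity) (by positivity) hp0 hp
  have e : ((1+u)^2/(1+s))^(-p) = (1+s)^p * (1+u)^(-(2*p)) := by
    rw [Real.div_rpow (by positivity) (by positivity), ← Real.rpow_natCast, ← Real.rpow_mul (by positivity),
      Real.rpow_neg (by positivity : 0 ≤ 1+s), div_inv_eq_mul, mul_comm]
    congr 2; push_cast; ring
  rw [e] at h
  have e2 : 1 + 1/(c/2) = 1 + 2/c := by field_simp
  rw [e2] at h
  rw [mul_assoc]
  refine le_trans ?_ (mul_le_mul_of_nonneg_left h (Real.exp_pos c).le)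
  rw [← Real.exp_add]
  apply Real.exp_le_exp.2
  have : (1+u)^2/(1+s) ≤ 2 + 2 * (u^2/(1+s)) := by
    rw [div_le_iff₀ (by positivity)]
    have : (2 + 2 * (u^2/(1+s))) * (1+s) = 2*(1+s) + 2*u^2 := by field_simp
    rw [this]; nlinarith [sq_nonneg (1-u)]
  nlinarith

lemma sqrt_inv_ge (v : ℝ) (hv : 0 < v) : (1+v)^(-(1/2):ℝ) ≤ (√v)⁻¹ := by
  rw [Real.sqrt_eq_rpow, ← Real.rpow_neg hv.le]
  exact Real.rpow_le_rpow_of_nonpos hv (by linarith) (by norm_num)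

lemma le_pp (v : ℝ) (hv : 0 < v) : (1+v)^(-(9/8):ℝ) ≤ pp v := by
  have e : (1+v)^(-(9/8):ℝ) = (1+v)^(-(1/2):ℝ) * (1+v)^(-(5/8):ℝ) := by
    rw [← Real.rpow_add (by linarith)]; norm_num
  rw [e]; unfold pp
  have := sqrt_inv_ge v hv
  gcongr

lemma rp (v a b : ℝ) (hv : 0 < v) (h : a ≤ b) : (1+v)^a ≤ (1+v)^b :=
  Real.rpow_le_rpow_of_exponent_le (by linarith) h

lemma pA (r u c : ℝ) (hr : 0 < r) (hu : 0 < u) (hc : 0 < c) :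
    (1+(r+u))^(-(1/2):ℝ) * ((1+r)^(-(3/4):ℝ) * (√r)⁻¹) * Real.exp (-(c * (u^2/(1+(r+u))))) ≤
      Real.exp c * (1 + 2/c) * (pp r * pp u) := by
  have h := expc c u (r+u) (5/8) hc (by linarith) hu (by norm_num) (by norm_num)
  have hs : 0 < 1 + (r+u) := by linarith
  set K := Real.exp c * (1+2/c) with hK
  have hK0 : 0 < K := by positivity
  have h8 : (1+(r+u))^((1/8):ℝ) ≤ (1+r)^((1/8):ℝ) * (1+u)^((1/8):ℝ) := by
    rw [← Real.mul_rpow (by positivity) (by positivity)]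
    apply Real.rpow_le_rpow (by positivity) _ (by norm_num)
    nlinarith [mul_pos hr hu]
  calc _ ≤ (1+(r+u))^(-(1/2):ℝ) * ((1+r)^(-(3/4):ℝ) * (√r)⁻¹) * (K * ((1+(r+u))^((5/8):ℝ) * (1+u)^(-(2*(5/8)):ℝ))) := by gcongr
    _ = K * ((1+r)^(-(3/4):ℝ) * (√r)⁻¹ * (1+u)^(-(2*(5/8)):ℝ)) * ((1+(r+u))^(-(1/2):ℝ) * (1+(r+u))^((5/8):ℝ)) := by ring
    _ = K * ((1+r)^(-(3/4):ℝ) * (√r)⁻¹ * (1+u)^(-(2*(5/8)):ℝ)) * (1+(r+u))^((1/8):ℝ) := by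
        rw [← Real.rpow_add hs]; norm_num
    _ ≤ K * ((1+r)^(-(3/4):ℝ) * (√r)⁻¹ * (1+u)^(-(2*(5/8)):ℝ)) * ((1+r)^((1/8):ℝ) * (1+u)^((1/8):ℝ)) := by gcongr
    _ = K * (((√r)⁻¹ * ((1+r)^(-(3/4):ℝ) * (1+r)^((1/8):ℝ))) * ((1+u)^(-(2*(5/8)):ℝ) * (1+u)^((1/8):ℝ))) := by ring
    _ = K * (pp r * (1+u)^(-(9/8):ℝ)) := by
        rw [← Real.rpow_add (by linarith), ← Real.rpow_add (by linarith)]; unfold pp; norm_num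
    _ ≤ _ := by
        have := le_pp u hu
        have := pp_nonneg r hr
        gcongr

lemma pB (r u c : ℝ) (hr : 0 < r) (hu : 0 < u) (hc : 0 < c) :
    (1+(r+u))^(-(1/2):ℝ) * ((1+r)^(-1:ℝ) * (√u)⁻¹) * Real.exp (-(c * (u^2/(1+(r+u))))) ≤
      Real.exp c * (1 + 2/c) * (pp r * pp u) := by
  have h := expc c u (r+u) (3/8) hc (by linarith) hu (by norm_num) (by norm_num)
  have hs : 0 < 1 + (r+u) := by linarith
  set K := Real.exp c * (1+2/c) with hK
  have hK0 : 0 < K := by positivity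
  have h8 : (1+(r+u))^(-(1/8):ℝ) ≤ (1+r)^(-(1/8):ℝ) := 
    Real.rpow_le_rpow_of_nonpos (by linarith) (by linarith) (by norm_num)
  calc _ ≤ (1+(r+u))^(-(1/2):ℝ) * ((1+r)^(-1:ℝ) * (√u)⁻¹) * (K * ((1+(r+u))^((3/8):ℝ) * (1+u)^(-(2*(3/8)):ℝ))) := by gcongr
    _ = K * ((1+r)^(-1:ℝ) * (√u)⁻¹ * (1+u)^(-(2*(3/8)):ℝ)) * ((1+(r+u))^(-(1/2):ℝ) * (1+(r+u))^((3/8):ℝ)) := by ring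
    _ = K * ((1+r)^(-1:ℝ) * (√u)⁻¹ * (1+u)^(-(2*(3/8)):ℝ)) * (1+(r+u))^(-(1/8):ℝ) := by
        rw [← Real.rpow_add hs]; norm_num
    _ ≤ K * ((1+r)^(-1:ℝ) * (√u)⁻¹ * (1+u)^(-(2*(3/8)):ℝ)) * (1+r)^(-(1/8):ℝ) := by gcongr
    _ = K * (((1+r)^(-1:ℝ) * (1+r)^(-(1/8):ℝ)) * ((√u)⁻¹ * (1+u)^(-(2*(3/8)):ℝ))) := by ring
    _ = K * ((1+r)^(-(9/8):ℝ) * ((√u)⁻¹ * (1+u)^(-(2*(3/8)):ℝ))) := by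
        rw [← Real.rpow_add (by linarith)]; norm_num
    _ ≤ _ := by
        have h1 := le_pp r hr
        have h2 := pp_nonneg r hr
        have h3 : (√u)⁻¹ * (1+u)^(-(2*(3/8)):ℝ) ≤ pp u := by
          unfold pp; gcongr ?_ * ?_; exact rp u _ _ hu (by norm_num)
        gcongr

lemma sq_rp (v : ℝ) (hv : 0 < v) : (√v)⁻¹ = v^(-(1/2):ℝ) := by
  rw [Real.sqrt_eq_rpow, ← Real.rpow_neg hv.le]

lemma pt (κ ξ r u t : ℝ) (hκ : 0 < κ) (hr : 0 < r) (hu : 0 < u) (ht : r + u < t) :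
    (√(1+(r+u)))⁻¹ * (((1+r)^((1:ℝ)/4)/√r + 1/√u)/(1+r)) *
      Real.exp (-(κ*u^2*(t-(r+u))/(2*(1+(r+u))*(1+t)) + κ/(1+t)*(u-ξ)^2)) ≤
    2 * (Real.exp (κ/4) * (1 + 2/(κ/4))) * (pp r * pp u) +
    4 * (pp r * ((√(1+t))⁻¹ * Real.exp (-(κ/(1+t))*(u-ξ)^2))) +
    8 * ((1+t)⁻¹ * ((√(1+t))⁻¹ * (√u)⁻¹)) := by
  have hs : 0 < 1 + (r+u) := by linarith
  have h1t : 0 < 1 + t := by linarith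
  have e0 : ((1+r)^((1:ℝ)/4)/√r + 1/√u)/(1+r) = (1+r)^(-(3/4):ℝ) * (√r)⁻¹ + (1+r)^(-1:ℝ) * (√u)⁻¹ := by
    have : (1+r)^(-(3/4):ℝ) = (1+r)^((1:ℝ)/4) * (1+r)^(-1:ℝ) := by
      rw [← Real.rpow_add (by linarith)]; norm_num
    rw [this, Real.rpow_neg_one]; ring
  rw [e0]
  have p1 := pp_nonneg r hr
  have p2 := pp_nonneg u hu
  set K := (Real.exp (κ/4) * (1 + 2/(κ/4))) with hK
  have hK0 : 0 < K := by positivity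
  have hts : 0 < t - (r+u) := by linarith
  by_cases hc : 2*(1+(r+u)) ≤ 1+t
  · have hA := pA r u (κ/4) hr hu (by positivity)
    have hB := pB r u (κ/4) hr hu (by positivity)
    rw [← sq_rp _ hs, ← hK] at hA hB
    have hE : Real.exp (-(κ*u^2*(t-(r+u))/(2*(1+(r+u))*(1+t)) + κ/(1+t)*(u-ξ)^2)) ≤ Real.exp (-(κ/4 * (u^2/(1+(r+u))))) := by
      apply Real.exp_le_exp.2
      have g1 : 0 ≤ κ/(1+t)*(u-ξ)^2 := by positivity
      have g2 : κ/4 * (u^2/(1+(r+u))) ≤ κ*u^2*(t-(r+u))/(2*(1+(r+u))*(1+t)) := by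
        have : (1/2:ℝ) ≤ (t-(r+u))/(1+t) := by rw [div_le_div_iff₀ (by norm_num) h1t]; linarith
        calc κ/4 * (u^2/(1+(r+u))) = κ*u^2/(2*(1+(r+u))) * (1/2) := by field_simp; norm_num
          _ ≤ κ*u^2/(2*(1+(r+u))) * ((t-(r+u))/(1+t)) := by gcongr
          _ = _ := by field_simp
      linarith
    have n1 : 0 ≤ 4 * (pp r * ((√(1+t))⁻¹ * Real.exp (-(κ/(1+t))*(u-ξ)^2))) := by positivity
    have n2 : 0 ≤ 8 * ((1+t)⁻¹ * ((√(1+t))⁻¹ * (√u)⁻¹)) := by positivity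
    calc _ ≤ (√(1+(r+u)))⁻¹ * ((1+r)^(-(3/4):ℝ) * (√r)⁻¹ + (1+r)^(-1:ℝ) * (√u)⁻¹) * Real.exp (-(κ/4 * (u^2/(1+(r+u))))) := by gcongr
      _ ≤ _ := by rw [mul_add, add_mul]; linarith
  · push Not at hc
    set G := Real.exp (-(κ/(1+t))*(u-ξ)^2) with hG
    have hG1 : G ≤ 1 := Real.exp_le_one_iff.2 (by
      have : 0 ≤ κ/(1+t)*(u-ξ)^2 := by positivity
      linarith)
    have hG0 : 0 < G := Real.exp_pos _
    have hE : Real.exp (-(κ*u^2*(t-(r+u))/(2*(1+(r+u))*(1+t)) + κ/(1+t)*(u-ξ)^2)) ≤ G := by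
      apply Real.exp_le_exp.2
      have : 0 ≤ κ*u^2*(t-(r+u))/(2*(1+(r+u))*(1+t)) := by positivity
      linarith
    have hS : (√(1+(r+u)))⁻¹ ≤ 2 * (√(1+t))⁻¹ := by
      rw [← div_eq_mul_inv, inv_eq_one_div, div_le_div_iff₀ (by positivity) (by positivity), one_mul]
      rw [Real.sqrt_le_left (by positivity), mul_pow, Real.sq_sqrt hs.le]
      linarith
    have n0 : 0 ≤ 2 * K * (pp r * pp u) := by positivity
    have hA : (1+r)^(-(3/4):ℝ) * (√r)⁻¹ ≤ pp r := by
      unfold pp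
      rw [mul_comm]; gcongr ?_ * ?_; exact rp r _ _ hr (by norm_num)
    have hB : (1+r)^(-1:ℝ) * (√u)⁻¹ * G ≤ pp r * G + 4 * ((1+t)⁻¹ * (√u)⁻¹) := by
      rcases le_total (1+r) u with h | h
      · have : (1+r)^(-1:ℝ) * (√u)⁻¹ ≤ pp r := by
          refine le_trans ?_ (le_pp r hr)
          have : (√u)⁻¹ ≤ (1+r)^(-(1/2):ℝ) := by
            rw [← sq_rp _ (by linarith)]; gcongr
          calc _ ≤ (1+r)^(-1:ℝ) * (1+r)^(-(1/2):ℝ) := by gcongr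
            _ = (1+r)^(-(3/2):ℝ) := by rw [← Real.rpow_add (by linarith)]; norm_num
            _ ≤ _ := rp r _ _ hr (by norm_num)
        have n : 0 ≤ 4 * ((1+t)⁻¹ * (√u)⁻¹) := by positivity
        nlinarith
      · have : (1+r)^(-1:ℝ) ≤ 4 * (1+t)⁻¹ := by
          rw [Real.rpow_neg_one, ← div_eq_mul_inv, inv_eq_one_div, div_le_div_iff₀ (by positivity) (by positivity)]
          linarith
        have n : 0 ≤ pp r * G := by positivity
        calc _ ≤ 4 * (1+t)⁻¹ * (√u)⁻¹ * 1 := by gcongr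
          _ ≤ _ := by linarith
    calc _ ≤ (2 * (√(1+t))⁻¹) * ((1+r)^(-(3/4):ℝ) * (√r)⁻¹ + (1+r)^(-1:ℝ) * (√u)⁻¹) * G := by gcongr
      _ = (2 * (√(1+t))⁻¹) * ((1+r)^(-(3/4):ℝ) * (√r)⁻¹ * G + (1+r)^(-1:ℝ) * (√u)⁻¹ * G) := by ring
      _ ≤ (2 * (√(1+t))⁻¹) * (pp r * G + (pp r * G + 4 * ((1+t)⁻¹ * (√u)⁻¹))) := by gcongr
      _ = 4 * (pp r * ((√(1+t))⁻¹ * G)) + 8 * ((1+t)⁻¹ * ((√(1+t))⁻¹ * (√u)⁻¹)) := by ring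
      _ ≤ _ := by linarith

def F5 (t : ℝ) : ℝ → ℝ := (Ioc 0 t).indicator (fun _ => (1+t)⁻¹)
def G5 (t : ℝ) : ℝ → ℝ := (Ioc 0 t).indicator (fun u => (√(1+t))⁻¹ * (√u)⁻¹)
def G4 (κ ξ t : ℝ) (u : ℝ) : ℝ := (√(1+t))⁻¹ * Real.exp (-(κ/(1+t))*(u-ξ)^2)

lemma F5_int (t : ℝ) : Integrable (F5 t) := by
  unfold F5
  rw [integrable_indicator_iff measurableSet_Ioc]
  exact integrableOn_const (by simp)

lemma F5_val (t : ℝ) (ht : 0 ≤ t) : ∫ r, F5 t r ≤ 1 := by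
  unfold F5
  rw [integral_indicator measurableSet_Ioc, setIntegral_const]
  simp [ht]
  rw [← div_eq_mul_inv, div_le_one (by linarith)]; linarith

lemma sqi (t : ℝ) (ht : 0 ≤ t) : IntegrableOn (fun v : ℝ => (√v)⁻¹) (Ioc 0 t) ∧
    ∫ v in Ioc 0 t, (√v)⁻¹ = 2 * √t := by
  have h : IntervalIntegrable (fun x : ℝ => x ^ (-(1/2):ℝ)) volume 0 t :=
    intervalIntegral.intervalIntegrable_rpow' (by norm_num)
  rw [intervalIntegrable_iff_integrableOn_Ioc_of_le ht] at h
  have hh : EqOn (fun x : ℝ => x ^ (-(1/2):ℝ)) (fun v : ℝ => (√v)⁻¹) (Ioc 0 t) := fun v hv => (sq_rp v hv.1).symm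
  refine ⟨h.congr_fun hh measurableSet_Ioc, ?_⟩
  rw [← setIntegral_congr_fun measurableSet_Ioc hh, ← intervalIntegral.integral_of_le ht, integral_rpow (by norm_num),
    Real.sqrt_eq_rpow]
  norm_num
  ring

lemma G5_int (t : ℝ) (ht : 0 ≤ t) : Integrable (G5 t) := by
  unfold G5
  rw [integrable_indicator_iff measurableSet_Ioc]
  exact (sqi t ht).1.const_mul _

lemma G5_val (t : ℝ) (ht : 0 ≤ t) : ∫ r, G5 t r ≤ 2 := by
  unfold G5
  rw [integral_indicator measurableSet_Ioc, integral_const_mul, (sqi t ht).2]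
  rw [inv_mul_le_iff₀ (by positivity)]
  have : √t ≤ √(1+t) := Real.sqrt_le_sqrt (by linarith)
  linarith

lemma G4_int (κ ξ t : ℝ) (hκ : 0 < κ) (ht : 0 ≤ t) : Integrable (G4 κ ξ t) := by
  unfold G4
  exact ((integrable_exp_neg_mul_sq (b := κ/(1+t)) (by positivity)).comp_sub_right ξ).const_mul _

lemma G4_val (κ ξ t : ℝ) (hκ : 0 < κ) (ht : 0 ≤ t) : ∫ u, G4 κ ξ t u = √(Real.pi/κ) := by
  unfold G4
  rw [integral_const_mul, integral_sub_right_eq_self (fun y => Real.exp (-(κ/(1+t)) * y^2)) ξ, integral_gaussian]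
  have : Real.pi / (κ/(1+t)) = (1+t) * (Real.pi/κ) := by field_simp
  rw [this, Real.sqrt_mul (by positivity), inv_mul_cancel_left₀ (by positivity)]

lemma main_dbl (κ : ℝ) (hκ : 0 < κ) : ∃ C : ℝ, 0 < C ∧ ∀ ξ t D : ℝ, 0 ≤ t → 0 ≤ D → 
    ∫ s in Ioo 0 t, ∫ r in Ioo 0 s, D * ((√(1+s))⁻¹ * (((1+r)^((1:ℝ)/4)/√r + 1/√(s-r))/(1+r)) *
      Real.exp (-(κ*(s-r)^2*(t-s)/(2*(1+s)*(1+t)) + κ/(1+t)*((s-r)-ξ)^2))) ≤ D * C := by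
  set K := 2 * (Real.exp (κ/4) * (1 + 2/(κ/4))) with hK
  have hK0 : 0 < K := by positivity
  have I0 : 0 ≤ ∫ v, PP v := integral_nonneg PP_nonneg
  refine ⟨K * ((∫ v, PP v) * ∫ v, PP v) + 4 * ((∫ v, PP v) * √(Real.pi/κ)) + 8 * (1 * 2), by positivity, ?_⟩
  intro ξ t D ht hD
  have F0 : ∀ r, 0 ≤ F5 t r := fun r => indicator_nonneg (fun _ _ => by positivity) r
  have G0 : ∀ r, 0 ≤ G5 t r := fun r => indicator_nonneg (fun _ _ => by positivity) r
  have G40 : ∀ r, 0 ≤ G4 κ ξ t r := fun r => by unfold G4; positivity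
  have i1 := (conv_int PP PP PP_int PP_int).const_mul K
  have i2 := (conv_int PP (G4 κ ξ t) PP_int (G4_int κ ξ t hκ ht)).const_mul 4
  have i3 := (conv_int (F5 t) (G5 t) (F5_int t) (G5_int t ht)).const_mul 8
  refine (dbl _ (fun s r => D * (K * (PP r * PP (s-r)) + 4 * (PP r * G4 κ ξ t (s-r)) + 8 * (F5 t r * G5 t (s-r)))) t ?_ ?_ ?_ ?_).trans ?_
  · intro s r hr hs hst
    positivity
  · intro s r hr hs hst
    have hu : 0 < s - r := by linarith
    have := pt κ ξ r (s-r) t hκ hr hu (by linarith)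
    rw [add_sub_cancel] at this
    have a1 : PP r = pp r := indicator_of_mem (show r ∈ Ioi 0 from hr) _
    have a2 : PP (s-r) = pp (s-r) := indicator_of_mem (show s-r ∈ Ioi 0 from hu) _
    have a3 : F5 t r = (1+t)⁻¹ := indicator_of_mem (show r ∈ Ioc 0 t from ⟨hr, by linarith⟩) _
    have a4 : G5 t (s-r) = (√(1+t))⁻¹ * (√(s-r))⁻¹ := indicator_of_mem (show s-r ∈ Ioc 0 t from ⟨hu, by linarith⟩) _
    simp only [a1, a2, a3, a4]
    exact mul_le_mul_of_nonneg_left this hD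
  · intro s r
    have := PP_nonneg r
    have := PP_nonneg (s-r)
    have := F0 r
    have := G0 (s-r)
    have := G40 (s-r)
    positivity
  · exact ((i1.add i2).add i3).const_mul D
  · rw [integral_const_mul, integral_add (f := fun x : ℝ × ℝ => K * (PP x.2 * PP (x.1 - x.2)) + 4 * (PP x.2 * G4 κ ξ t (x.1 - x.2))) (i1.add i2) i3, integral_add i1 i2, integral_const_mul, integral_const_mul, integral_const_mul,
      conv_eq _ _ PP_int PP_int, conv_eq _ _ PP_int (G4_int κ ξ t hκ ht), conv_eq _ _ (F5_int t) (G5_int t ht), G4_val κ ξ t hκ ht]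
    have b1 := F5_val t ht
    have b2 := G5_val t ht
    have b3 : 0 ≤ ∫ v, G5 t v := integral_nonneg G0
    gcongr

/-- Bound on the triple mix-term integral `J₆` (estimate (5.15) of the paper). -/
theorem bound_triple_mix_term_integral
    (M c₁ c₂ : ℝ) (hM : 0 < M) (hc : c₁ ≠ c₂) :
    ∃ C : ℝ, 0 < C ∧ ∀ x t : ℝ, 0 ≤ t →
      (∫ s in Set.Ioo (0 : ℝ) t, ∫ r in Set.Ioo (0 : ℝ) s, ∫ y : ℝ,
          Real.exp (-(2 * (x - y + c₁ * (t - s)) ^ 2) / (M * (t - s)) -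
              (y + c₁ * s) ^ 2 / (M * (1 + s)) -
              (y + c₂ * s + r * (c₁ - c₂)) ^ 2 / (M * (1 + s))) /
            ((1 + s) * Real.sqrt (t - s) * (1 + r)) *
            ((1 + r) ^ ((1 : ℝ) / 4) / Real.sqrt r + 1 / Real.sqrt (s - r))) ≤
        C * Real.exp (-(x + c₁ * t) ^ 2 / (M * (1 + t))) / Real.sqrt (1 + t) := by
  have hd : c₁ - c₂ ≠ 0 := sub_ne_zero.2 hc
  have hd2 : 0 < (c₁ - c₂)^2 := by positivity
  obtain ⟨C, hC, h⟩ := main_dbl ((c₁-c₂)^2/M) (by positivity)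
  refine ⟨√(Real.pi * M / 2) * C, by positivity, ?_⟩
  intro x t ht
  have h' := h ((x + c₁*t)/(c₁-c₂)) t (Real.exp (-(x + c₁ * t) ^ 2 / (M * (1 + t))) / √(1+t) * √(Real.pi * M / 2)) ht (by positivity)
  refine le_trans (le_of_eq ?_) (h'.trans (le_of_eq (by ring)))
  refine setIntegral_congr_fun measurableSet_Ioo fun s hs => ?_
  refine setIntegral_congr_fun measurableSet_Ioo fun r hr => ?_
  have h1 : 0 < 1 + s := by linarith [hs.1]
  have h2 : 0 < 1 + t := by linarith
  rw [yint M c₁ c₂ x t s r hM hs.1 hs.2]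
  congr 4
  set X := x + c₁ * t
  set d := c₁ - c₂
  have : s - r - X / d = (d * (s-r) - X)/d := by field_simp
  rw [this]
  congr 1
  · field_simp
  · field_simp; ring
end
end

section
/- Tail integral bound with velocity-difference decay (inequality (5.8) of the paper). Let a > 0. Then there exists a constant C > 0 such that for every r > 0: ∫_r^∞ exp( −a(s−r)²/(1+s) ) / ( √(1+s) √(s−r) ) ds ≤ C (1+r)^{1/4} / √r. -/
open MeasureTheory Set

noncomputable section

lemma aux_exp (a q u : ℝ) (ha : 0 < a) (hq : 1 ≤ q) (hu : 0 < u) :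
    Real.exp (-(a * u ^ 2) / (q ^ 2 + u)) ≤ Real.exp a * Real.exp (-(a / q * u)) := by
  rw [← Real.exp_add]
  apply Real.exp_le_exp.mpr
  have hq0 : 0 < q := by linarith
  have h : u / q - 1 ≤ u ^ 2 / (q ^ 2 + u) := by
    rw [le_div_iff₀ (by positivity), div_sub_one hq0.ne', div_mul_eq_mul_div, div_le_iff₀ hq0]
    nlinarith [mul_nonneg (sub_nonneg.2 hq) (sq_nonneg (u - q / 2)), pow_pos hq0 3, pow_pos hq0 2]
  have h2 := mul_le_mul_of_nonneg_left h ha.le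
  have e1 : -(a * u ^ 2) / (q ^ 2 + u) = -(a * (u ^ 2 / (q ^ 2 + u))) := by ring
  have e2 : a + -(a / q * u) = -(a * (u / q - 1)) := by ring
  rw [e1, e2]; linarith

/-- Tail integral bound with velocity-difference decay
(inequality (5.8) of the paper). -/
theorem tail_integral_velocity_difference (a : ℝ) (ha : 0 < a) :
    ∃ C : ℝ, 0 < C ∧ ∀ r : ℝ, 0 < r →
      (∫ s in Set.Ioi r,
          Real.exp (-(a * (s - r) ^ 2) / (1 + s)) /
            (Real.sqrt (1 + s) * Real.sqrt (s - r))) ≤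
        C * (1 + r) ^ ((1 : ℝ) / 4) / Real.sqrt r := by
  have hG : 0 < Real.Gamma (1 / 2) := Real.Gamma_pos_of_pos (by norm_num)
  refine ⟨Real.exp a * (1 / a) ^ ((1 : ℝ) / 2) * Real.Gamma (1 / 2), by positivity, ?_⟩
  intro r hr
  obtain ⟨q, hq⟩ : ∃ q, q = Real.sqrt (1 + r) := ⟨_, rfl⟩
  have hq2 : q ^ 2 = 1 + r := by rw [hq, Real.sq_sqrt (by linarith)]
  have hq0 : 0 ≤ q := hq ▸ Real.sqrt_nonneg _
  have hq1 : 1 ≤ q := by nlinarith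
  have hqp : 0 < q := by linarith
  have hI := Real.integral_rpow_mul_exp_neg_mul_Ioi (a := 1 / 2) (r := a / q)
    (by norm_num) (by positivity)
  have hint : IntegrableOn (fun t : ℝ => t ^ ((1 : ℝ) / 2 - 1) * Real.exp (-(a / q * t)))
      (Ioi 0) := by
    by_contra h
    rw [integral_undef h] at hI
    have : 0 < (1 / (a / q)) ^ ((1 : ℝ) / 2) * Real.Gamma (1 / 2) := by positivity
    linarith
  have hshift : (∫ s in Set.Ioi r, Real.exp (-(a * (s - r) ^ 2) / (1 + s)) /
            (Real.sqrt (1 + s) * Real.sqrt (s - r))) =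
      ∫ u in Set.Ioi (0 : ℝ), Real.exp (-(a * u ^ 2) / (q ^ 2 + u)) /
            (Real.sqrt (q ^ 2 + u) * Real.sqrt u) := by
    have := (measurePreserving_add_right (volume : Measure ℝ) r).setIntegral_preimage_emb
      (measurableEmbedding_addRight r) (fun s => Real.exp (-(a * (s - r) ^ 2) / (1 + s)) /
            (Real.sqrt (1 + s) * Real.sqrt (s - r))) (Ioi r)
    rw [← this]
    simp [hq2, add_assoc, add_comm, add_left_comm]
  have key : (∫ u in Set.Ioi (0 : ℝ), Real.exp (-(a * u ^ 2) / (q ^ 2 + u)) /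
            (Real.sqrt (q ^ 2 + u) * Real.sqrt u)) ≤
      ∫ u in Set.Ioi (0 : ℝ), (Real.exp a / q) *
        (u ^ ((1 : ℝ) / 2 - 1) * Real.exp (-(a / q * u))) := by
    apply integral_mono_of_nonneg
    · exact Filter.Eventually.of_forall fun u => by positivity
    · exact hint.const_mul _
    · filter_upwards [ae_restrict_mem measurableSet_Ioi] with u hu
      have hu : 0 < u := hu
      have h1 : q ≤ Real.sqrt (q ^ 2 + u) := Real.le_sqrt_of_sq_le (by linarith)
      have hs : 0 < Real.sqrt u := Real.sqrt_pos.2 hu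
      have h2 : u ^ ((1 : ℝ) / 2 - 1) = 1 / Real.sqrt u := by
        rw [show (1 : ℝ) / 2 - 1 = -(1 / 2) by norm_num, Real.rpow_neg hu.le,
          ← Real.sqrt_eq_rpow, one_div]
      simp only [h2]
      calc _ ≤ (Real.exp a * Real.exp (-(a / q * u))) / (q * Real.sqrt u) := by
            gcongr
            exact aux_exp a q u ha hq1 hu
        _ = _ := by field_simp
  rw [hshift]
  refine key.trans ?_
  rw [integral_const_mul, hI]
  have h4 : (1 + r) ^ ((1 : ℝ) / 4) = q ^ ((1 : ℝ) / 2) := by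
    rw [← hq2, ← Real.rpow_natCast, ← Real.rpow_mul hq0]; norm_num
  have h5 : (1 / (a / q)) ^ ((1 : ℝ) / 2) = (1 / a) ^ ((1 : ℝ) / 2) * q ^ ((1 : ℝ) / 2) := by
    rw [← Real.mul_rpow (by positivity) hq0]; congr 1; field_simp
  rw [h4, h5]
  have hs : 0 < Real.sqrt r := Real.sqrt_pos.2 hr
  have hsq : Real.sqrt r ≤ q := hq ▸ Real.sqrt_le_sqrt (by linarith)
  calc _ = Real.exp a * (1 / a) ^ ((1 : ℝ) / 2) * Real.Gamma (1 / 2) * q ^ ((1 : ℝ) / 2) / q := by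
        ring
    _ ≤ _ := by gcongr
end
end

section
/- Exact solution exhibiting non-Gaussian decay (Remark 6.1). Let c₁, c₂ ∈ ℝ and define u(x,t) = e^{−(x+c₁t)²/(4(1+t))}/√(4π(1+t)) and v(x,t) = ∫_0^t e^{−(x + t c₂ + s(c₁−c₂))²/(1+t)} / ( 16π² (1+s)^{3/2} √(1+t) ) ds for x ∈ ℝ and t ≥ 0. Then for every x ∈ ℝ and t > 0 the partial derivatives below exist and satisfy ∂_t u(x,t) = ∂_x² u(x,t) + c₁ ∂_x u(x,t) and ∂_t v(x,t) = (1/4) ∂_x² v(x,t) + c₂ ∂_x v(x,t) + u(x,t)⁴; moreover v(x,0) = 0. -/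
open MeasureTheory Set

noncomputable section

def gK (A y t : ℝ) : ℝ := Real.exp (-y ^ 2 / (A * (1 + t))) / Real.sqrt (1 + t)
def gY (A y t : ℝ) : ℝ := (-2 * y / (A * (1 + t))) * gK A y t
def gYY (A y t : ℝ) : ℝ := (4 * y ^ 2 / (A ^ 2 * (1 + t) ^ 2) - 2 / (A * (1 + t))) * gK A y t

lemma gK_y {A t : ℝ} (e x : ℝ) :
    HasDerivAt (fun ξ => gK A (ξ + e) t) (gY A (x + e) t) x := by
  have h1 : HasDerivAt (fun ξ : ℝ => ξ + e) 1 x := (hasDerivAt_id x).add_const e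
  have h := ((((h1.pow 2).neg).div_const (A * (1 + t))).exp).div_const (Real.sqrt (1 + t))
  refine h.congr_deriv ?_
  simp only [gY, gK, Pi.neg_apply, Pi.pow_apply]
  push_cast
  ring

lemma gY_y {A t : ℝ} (e x : ℝ) :
    HasDerivAt (fun ξ => gY A (ξ + e) t) (gYY A (x + e) t) x := by
  have h1 : HasDerivAt (fun ξ : ℝ => ξ + e) 1 x := (hasDerivAt_id x).add_const e
  have h := ((h1.const_mul (-2)).div_const (A * (1 + t))).mul (gK_y (A := A) (t := t) e x)
  refine h.congr_deriv ?_
  simp only [gYY, gY]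
  generalize 1 + t = q
  ring

lemma gK_t {A t : ℝ} (hA : 0 < A) (ht : -1 < t) (e c x : ℝ) :
    HasDerivAt (fun τ => gK A (x + τ * c + e) τ)
      (c * gY A (x + t * c + e) t + A / 4 * gYY A (x + t * c + e) t) t := by
  have hp : 0 < 1 + t := by linarith
  have h1 : HasDerivAt (fun τ : ℝ => x + τ * c + e) (1 * c) t :=
    (((hasDerivAt_id t).mul_const c).const_add x).add_const e
  have h2 : HasDerivAt (fun τ : ℝ => 1 + τ) 1 t := (hasDerivAt_id t).const_add 1
  have hs : 0 < Real.sqrt (1 + t) := Real.sqrt_pos.2 hp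
  have h := ((((h1.pow 2).neg).div (h2.const_mul A) (by positivity)).exp).div
    (h2.sqrt hp.ne') hs.ne'
  refine h.congr_deriv ?_
  simp only [gYY, gY, gK, Pi.neg_apply, Pi.pow_apply, Pi.div_apply]
  have hq : Real.sqrt (1 + t) ^ 2 = 1 + t := Real.sq_sqrt hp.le
  set E := Real.exp (-(x + t * c + e) ^ 2 / (A * (1 + t)))
  set r := Real.sqrt (1 + t)
  rw [← hq]
  field_simp
  push_cast
  ring

lemma dint {F F' : ℝ → ℝ → ℝ} {U V : Set ℝ} {x a b : ℝ} (hU : IsOpen U) (hx : x ∈ U)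
    (hab : uIcc a b ⊆ V) (hF : ∀ y ∈ U, ContinuousOn (F y) V)
    (hF' : ContinuousOn (fun p : ℝ × ℝ => F' p.1 p.2) (U ×ˢ V))
    (hd : ∀ y ∈ U, ∀ s ∈ V, HasDerivAt (fun z => F z s) (F' y s) y) :
    IntervalIntegrable (F' x) volume a b ∧
    HasDerivAt (fun y => ∫ s in a..b, F y s) (∫ s in a..b, F' x s) x := by
  obtain ⟨δ, hδ, hball⟩ := Metric.nhds_basis_closedBall.mem_iff.1 (hU.mem_nhds hx)
  obtain ⟨C, hC⟩ := ((isCompact_closedBall x δ).prod (isCompact_uIcc (a := a) (b := b))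
    ).exists_bound_of_continuousOn (hF'.mono (prod_mono hball hab))
  have hsub : uIoc a b ⊆ uIcc a b := uIoc_subset_uIcc
  have hmeas : ∀ y ∈ U, AEStronglyMeasurable (F y) (volume.restrict (uIoc a b)) := fun y hy =>
    ((hF y hy).mono (hsub.trans hab)).aestronglyMeasurable measurableSet_uIoc
  have hc' : ContinuousOn (F' x) V :=
    hF'.comp (by fun_prop : ContinuousOn (fun s : ℝ => (x, s)) V) (fun s hs => ⟨hx, hs⟩)
  refine intervalIntegral.hasDerivAt_integral_of_dominated_loc_of_deriv_le (bound := fun _ => C)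
    (Metric.closedBall_mem_nhds x hδ) ?_ ((hF x hx).mono hab).intervalIntegrable
    ((hc'.mono (hsub.trans hab)).aestronglyMeasurable measurableSet_uIoc)
    ?_ intervalIntegrable_const ?_
  · filter_upwards [hU.mem_nhds hx] with y hy using hmeas y hy
  · exact Filter.Eventually.of_forall fun s hs y hy => hC (y, s) ⟨hy, hsub hs⟩
  · exact Filter.Eventually.of_forall fun s hs y hy => hd y (hball hy) s (hab (hsub hs))

lemma leib {F F' : ℝ → ℝ → ℝ} {U : Set ℝ} {t : ℝ} (hU : IsOpen U) (ht : t ∈ U)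
    (hab : uIcc 0 t ⊆ U) (hF : ∀ y ∈ U, ContinuousOn (F y) U)
    (hF' : ContinuousOn (fun p : ℝ × ℝ => F' p.1 p.2) (U ×ˢ U))
    (hd : ∀ y ∈ U, ∀ s ∈ U, HasDerivAt (fun z => F z s) (F' y s) y) :
    HasDerivAt (fun τ => ∫ s in (0 : ℝ)..τ, F τ s) ((∫ s in (0 : ℝ)..t, F' t s) + F t t) t := by
  have h1 := (dint hU ht hab hF hF' hd).2
  have hmem := hU.mem_nhds ht
  have h2 : HasDerivAt (fun τ => ∫ s in t..τ, F t s) (F t t) t := by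
    refine intervalIntegral.integral_hasDerivAt_right (by simp) ?_ ((hF t ht).continuousAt hmem)
    exact (hF t ht).stronglyMeasurableAtFilter hU t ht
  obtain ⟨δ, hδ, hball⟩ := Metric.nhds_basis_closedBall.mem_iff.1 hmem
  obtain ⟨C, hC⟩ := ((isCompact_closedBall t δ).prod (isCompact_closedBall t δ)
    ).exists_bound_of_continuousOn (hF'.mono (prod_mono hball hball))
  have hconv : Convex ℝ (Metric.closedBall t δ) := convex_closedBall t δ
  have htb : t ∈ Metric.closedBall t δ := Metric.mem_closedBall_self hδ.le
  have huIcc : ∀ τ ∈ Metric.closedBall t δ, uIcc t τ ⊆ Metric.closedBall t δ := fun τ hτ => by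
    rw [← segment_eq_uIcc]; exact hconv.segment_subset htb hτ
  have h3 : HasDerivAt (fun τ => ∫ s in t..τ, (F τ s - F t s)) 0 t := by
    have hO : (fun τ => ∫ s in t..τ, (F τ s - F t s)) =O[nhds t] fun τ => ‖τ - t‖ ^ 2 := by
      refine Asymptotics.IsBigO.of_bound C ?_
      filter_upwards [Metric.closedBall_mem_nhds t hδ] with τ hτ
      have := intervalIntegral.norm_integral_le_of_norm_le_const (a := t) (b := τ)
        (f := fun s => F τ s - F t s) (C := C * ‖τ - t‖) (fun s hs => by
          have hs' := huIcc τ hτ (uIoc_subset_uIcc hs)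
          exact hconv.norm_image_sub_le_of_norm_hasDerivWithin_le (f := fun z => F z s)
            (f' := fun z => F' z s)
            (fun y hy => (hd y (hball hy) s (hball hs')).hasDerivWithinAt)
            (fun y hy => hC (y, s) ⟨hy, hs'⟩) htb hτ)
      refine this.trans (le_of_eq ?_)
      simp only [Real.norm_eq_abs, abs_pow, abs_abs]
      ring
    have := hO.hasFDerivAt (𝕜 := ℝ) (by norm_num)
    exact this.hasDerivAt.congr_deriv (by simp)
  refine ((h1.add (h2.add h3)).congr_deriv (by simp)).congr_of_eventuallyEq ?_
  filter_upwards [Metric.closedBall_mem_nhds t hδ] with τ hτ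
  have hi : ∀ y ∈ U, IntervalIntegrable (F y) volume t τ := fun y hy =>
    ((hF y hy).mono ((huIcc τ hτ).trans hball)).intervalIntegrable
  have hi0 : IntervalIntegrable (F τ) volume 0 t :=
    ((hF τ (hball hτ)).mono hab).intervalIntegrable
  simp only [Pi.add_apply]
  rw [intervalIntegral.integral_sub (hi τ (hball hτ)) (hi t ht),
    ← intervalIntegral.integral_add_adjacent_intervals hi0 (hi τ (hball hτ))]
  ring

def kK (s : ℝ) : ℝ := 1 / (16 * Real.pi ^ 2 * (1 + s) ^ ((3 : ℝ) / 2))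

lemma kK_cont : ContinuousOn kK (Ioi (-1)) := by
  unfold kK
  have : ∀ s ∈ Ioi (-1 : ℝ), 0 < 1 + s := fun s hs => by have := mem_Ioi.1 hs; linarith
  refine ContinuousOn.div continuousOn_const ?_ ?_
  · refine continuousOn_const.mul (ContinuousOn.rpow_const (by fun_prop) ?_)
    intro s hs; exact Or.inl (this s hs).ne'
  · intro s hs
    have := this s hs
    positivity

lemma gK_cont {X : Type*} [TopologicalSpace X] {S : Set X} {y t : X → ℝ} {A : ℝ} (hA : 0 < A)
    (hy : ContinuousOn y S) (ht : ContinuousOn t S) (h : ∀ p ∈ S, t p ∈ Ioi (-1)) :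
    ContinuousOn (fun p => gK A (y p) (t p)) S := by
  have : ∀ s ∈ S, 0 < 1 + t s := fun s hs => by have := mem_Ioi.1 (h s hs); linarith
  unfold gK
  refine ContinuousOn.div (ContinuousOn.rexp (ContinuousOn.div (by fun_prop) (by fun_prop) ?_))
    (ContinuousOn.sqrt (by fun_prop)) ?_
  · intro s hs; have := this s hs; positivity
  · intro s hs; exact (Real.sqrt_pos.2 (this s hs)).ne'

lemma gY_cont {X : Type*} [TopologicalSpace X] {S : Set X} {y t : X → ℝ} {A : ℝ} (hA : 0 < A)
    (hy : ContinuousOn y S) (ht : ContinuousOn t S) (h : ∀ p ∈ S, t p ∈ Ioi (-1)) :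
    ContinuousOn (fun p => gY A (y p) (t p)) S := by
  have : ∀ s ∈ S, 0 < 1 + t s := fun s hs => by have := mem_Ioi.1 (h s hs); linarith
  unfold gY
  refine ContinuousOn.mul (ContinuousOn.div (by fun_prop) (by fun_prop) ?_) (gK_cont hA hy ht h)
  intro s hs; have := this s hs; positivity

lemma gYY_cont {X : Type*} [TopologicalSpace X] {S : Set X} {y t : X → ℝ} {A : ℝ} (hA : 0 < A)
    (hy : ContinuousOn y S) (ht : ContinuousOn t S) (h : ∀ p ∈ S, t p ∈ Ioi (-1)) :
    ContinuousOn (fun p => gYY A (y p) (t p)) S := by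
  have : ∀ s ∈ S, 0 < 1 + t s := fun s hs => by have := mem_Ioi.1 (h s hs); linarith
  unfold gYY
  refine ContinuousOn.mul (ContinuousOn.sub (ContinuousOn.div (by fun_prop) (by fun_prop) ?_)
    (ContinuousOn.div (by fun_prop) (by fun_prop) ?_)) (gK_cont hA hy ht h)
  all_goals intro s hs; have := this s hs; positivity

/-- Exact solution exhibiting non-Gaussian decay (Remark 6.1 of the paper):
`u(x,t) = e^{−(x+c₁t)²/(4(1+t))}/√(4π(1+t))` and
`v(x,t) = ∫_0^t e^{−(x+tc₂+s(c₁−c₂))²/(1+t)}/(16π²(1+s)^{3/2}√(1+t)) ds`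
solve `u_t = u_xx + c₁ u_x`, `v_t = (1/4) v_xx + c₂ v_x + u⁴`, with `v(·,0) = 0`. -/
theorem exact_solution_non_gaussian_decay
    (c₁ c₂ : ℝ) (u v : ℝ → ℝ → ℝ)
    (hu : u = fun x t =>
      Real.exp (-(x + c₁ * t) ^ 2 / (4 * (1 + t))) / Real.sqrt (4 * Real.pi * (1 + t)))
    (hv : v = fun x t => ∫ s in Set.Ioo (0 : ℝ) t,
      Real.exp (-(x + t * c₂ + s * (c₁ - c₂)) ^ 2 / (1 + t)) /
        (16 * Real.pi ^ 2 * (1 + s) ^ ((3 : ℝ) / 2) * Real.sqrt (1 + t))) :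
    (∀ x : ℝ, v x 0 = 0) ∧
    ∀ x t : ℝ, 0 < t →
      DifferentiableAt ℝ (fun τ => u x τ) t ∧
      DifferentiableAt ℝ (fun ξ => u ξ t) x ∧
      DifferentiableAt ℝ (deriv fun ξ => u ξ t) x ∧
      DifferentiableAt ℝ (fun τ => v x τ) t ∧
      DifferentiableAt ℝ (fun ξ => v ξ t) x ∧
      DifferentiableAt ℝ (deriv fun ξ => v ξ t) x ∧
      deriv (fun τ => u x τ) t =
        deriv (deriv fun ξ => u ξ t) x + c₁ * deriv (fun ξ => u ξ t) x ∧
      deriv (fun τ => v x τ) t =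
        (1 / 4) * deriv (deriv fun ξ => v ξ t) x + c₂ * deriv (fun ξ => v ξ t) x +
          (u x t) ^ 4 := by
  have hu' : ∀ x t, u x t = 1 / Real.sqrt (4 * Real.pi) * gK 4 (x + t * c₁ + 0) t := by
    intro x t
    rw [hu]
    simp only [gK]
    rw [Real.sqrt_mul (by positivity : (0 : ℝ) ≤ 4 * Real.pi), add_zero, mul_comm c₁ t]
    ring
  have hv' : ∀ x t, 0 ≤ t → v x t =
      ∫ s in (0 : ℝ)..t, kK s * gK 1 (x + t * c₂ + s * (c₁ - c₂)) t := by
    intro x t ht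
    rw [hv, intervalIntegral.integral_of_le ht]
    simp only
    rw [integral_Ioc_eq_integral_Ioo]
    congr 1
    ext s
    simp only [gK, kK, one_mul]
    ring
  refine ⟨fun x => by rw [hv' x 0 le_rfl]; simp, fun x t ht => ?_⟩
  have ht1 : t ∈ Ioi (-1 : ℝ) := by simp only [mem_Ioi]; linarith
  have hsub : uIcc 0 t ⊆ Ioi (-1 : ℝ) := by
    rw [uIcc_of_le ht.le]; intro s hs; simp only [mem_Ioi]; linarith [hs.1]
  -- u
  have ut := (gK_t (A := 4) (by norm_num) ht1 0 c₁ x).const_mul (1 / Real.sqrt (4 * Real.pi))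
  have ux : ∀ y, HasDerivAt (fun ξ => u ξ t)
      (1 / Real.sqrt (4 * Real.pi) * gY 4 (y + (t * c₁ + 0)) t) y := by
    intro y
    have := (gK_y (A := 4) (t := t) (t * c₁ + 0) y).const_mul (1 / Real.sqrt (4 * Real.pi))
    simpa only [hu', add_assoc] using this
  have uxx := (gY_y (A := 4) (t := t) (t * c₁ + 0) x).const_mul (1 / Real.sqrt (4 * Real.pi))
  have ux' : (deriv fun ξ => u ξ t) =
      fun y => 1 / Real.sqrt (4 * Real.pi) * gY 4 (y + (t * c₁ + 0)) t :=
    funext fun y => (ux y).deriv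
  have ut' := ut.congr_of_eventuallyEq (f₁ := fun τ => u x τ)
    (Filter.Eventually.of_forall fun τ => hu' x τ)
  -- v
  have vx : ∀ y, IntervalIntegrable
      (fun s => kK s * gY 1 (y + (t * c₂ + s * (c₁ - c₂))) t) volume 0 t ∧
      HasDerivAt (fun ξ => v ξ t)
      (∫ s in (0 : ℝ)..t, kK s * gY 1 (y + (t * c₂ + s * (c₁ - c₂))) t) y := by
    intro y
    have := dint (F := fun ξ s => kK s * gK 1 (ξ + (t * c₂ + s * (c₁ - c₂))) t)
      (F' := fun ξ s => kK s * gY 1 (ξ + (t * c₂ + s * (c₁ - c₂))) t) (x := y)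
      isOpen_univ (mem_univ y) hsub
      (fun z _ => kK_cont.mul (gK_cont one_pos (by fun_prop) (by fun_prop) fun _ _ => ht1))
      ((kK_cont.comp continuousOn_snd (fun p hp => hp.2)).mul
        (gY_cont one_pos (by fun_prop) (by fun_prop) fun _ _ => ht1))
      (fun z _ s _ => (gK_y _ z).const_mul _)
    refine ⟨this.1, ?_⟩
    simpa only [hv' _ t ht.le, add_assoc] using this.2
  have vxx := dint (F := fun ξ s => kK s * gY 1 (ξ + (t * c₂ + s * (c₁ - c₂))) t)
      (F' := fun ξ s => kK s * gYY 1 (ξ + (t * c₂ + s * (c₁ - c₂))) t) (x := x)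
      isOpen_univ (mem_univ x) hsub
      (fun z _ => kK_cont.mul (gY_cont one_pos (by fun_prop) (by fun_prop) fun _ _ => ht1))
      ((kK_cont.comp continuousOn_snd (fun p hp => hp.2)).mul
        (gYY_cont one_pos (by fun_prop) (by fun_prop) fun _ _ => ht1))
      (fun z _ s _ => (gY_y _ z).const_mul _)
  have vx' : (deriv fun ξ => v ξ t) =
      fun y => ∫ s in (0 : ℝ)..t, kK s * gY 1 (y + (t * c₂ + s * (c₁ - c₂))) t :=
    funext fun y => (vx y).2.deriv
  have vt := leib (F := fun τ s => kK s * gK 1 (x + τ * c₂ + s * (c₁ - c₂)) τ)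
    (F' := fun τ s => kK s * (c₂ * gY 1 (x + τ * c₂ + s * (c₁ - c₂)) τ +
      1 / 4 * gYY 1 (x + τ * c₂ + s * (c₁ - c₂)) τ)) isOpen_Ioi ht1 hsub
    (fun z hz => kK_cont.mul (gK_cont one_pos (by fun_prop) (by fun_prop) fun _ _ => hz))
    ((kK_cont.comp continuousOn_snd (fun p hp => hp.2)).mul
      ((continuousOn_const.mul
        (gY_cont one_pos (by fun_prop) (by fun_prop) fun p hp => hp.1)).add
      (continuousOn_const.mul
        (gYY_cont one_pos (by fun_prop) (by fun_prop) fun p hp => hp.1))))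
    (fun z hz s _ => (gK_t one_pos hz _ _ _).const_mul _)
  have vt' := vt.congr_of_eventuallyEq (f₁ := fun τ => v x τ) (by
    filter_upwards [lt_mem_nhds ht] with τ hτ using hv' x τ hτ.le)
  refine ⟨ut'.differentiableAt, (ux x).differentiableAt, ?_, vt'.differentiableAt,
    (vx x).2.differentiableAt, ?_, ?_, ?_⟩
  · rw [ux']; exact uxx.differentiableAt
  · rw [vx']; exact vxx.2.differentiableAt
  · rw [ux', uxx.deriv, ut'.deriv]
    simp only [add_assoc]
    ring
  · rw [vx', vxx.2.deriv, vt'.deriv]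
    have h4 : kK t * gK 1 (x + t * c₂ + t * (c₁ - c₂)) t = u x t ^ 4 := by
      rw [hu']
      have hp : 0 < 1 + t := by linarith
      have e1 : x + t * c₂ + t * (c₁ - c₂) = x + t * c₁ + 0 := by ring
      have e2 : (1 + t) ^ ((3 : ℝ) / 2) = (1 + t) * Real.sqrt (1 + t) := by
        rw [Real.sqrt_eq_rpow, ← Real.rpow_one_add' hp.le (by norm_num)]
        norm_num
      have e3 : Real.sqrt (1 + t) ^ 2 = 1 + t := Real.sq_sqrt hp.le
      have e4 : Real.sqrt (4 * Real.pi) ^ 2 = 4 * Real.pi := Real.sq_sqrt (by positivity)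
      have e5 : ∀ y : ℝ, Real.exp (-y ^ 2 / (1 * (1 + t))) =
          Real.exp (-y ^ 2 / (4 * (1 + t))) ^ 4 := by
        intro y
        rw [← Real.exp_nat_mul]
        congr 1
        push_cast
        field_simp
      have hs : 0 < Real.sqrt (1 + t) := Real.sqrt_pos.2 hp
      simp only [kK, gK]
      rw [e1, e2, e5, mul_pow, div_pow, div_pow, one_pow,
        show Real.sqrt (4 * Real.pi) ^ 4 = (Real.sqrt (4 * Real.pi) ^ 2) ^ 2 by ring, e4,
        show Real.sqrt (1 + t) ^ 4 = (1 + t) * Real.sqrt (1 + t) * Real.sqrt (1 + t) by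
          nth_rewrite 2 [← e3]; ring]
      field_simp
      norm_num
    rw [h4]
    congr 1
    rw [← intervalIntegral.integral_const_mul, ← intervalIntegral.integral_const_mul,
      ← intervalIntegral.integral_add (vxx.1.const_mul _) ((vx x).1.const_mul _)]
    congr 1
    ext s
    simp only [add_assoc]
    ring
end
end
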